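/- There exist constants c > 0 and C ≥ 1 such that for every integer n ≥ 2 there is an instance (J,M) of P||C_max with at most C·n jobs, at most C·n machines, processing times p_j ∈ {1,2} for every job j ∈ J, and opt(J,M) = 2, such that xc(P(J,M)) ≥ 2^{c·n/log n}. -/

import Mathlib

open Finset

noncomputable section

/-- An extended formulation of size `k` (number of inequalities) for `P ⊆ ℝ^ι`. -/
def IsEF {ι : Type} [Fintype ι] (P : Set (ι → ℝ)) (k : ℕ) : Prop :=
  ∃ (e l : ℕ) (A : Matrix (Fin k) (Fin e) ℝ) (b : Fin k → ℝ)
    (C : Matrix (Fin l) (Fin e) ℝ) (d : Fin l → ℝ)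
    (π : (Fin e → ℝ) →ᵃ[ℝ] (ι → ℝ)),
    π '' {y | (∀ r, A.mulVec y r ≤ b r) ∧ (∀ r, C.mulVec y r = d r)} = P

/-- The extension complexity of `P`. -/
noncomputable def xc {ι : Type} [Fintype ι] (P : Set (ι → ℝ)) : ℕ :=
  sInf {k | IsEF P k}

/-- The load of machine `i` under schedule `σ`. -/
def load {n m : ℕ} (p : Fin n → ℕ) (σ : Fin n → Fin m) (i : Fin m) : ℕ :=
  ∑ j, if σ j = i then p j else 0

/-- The makespan of a schedule: the maximum machine load. -/
def makespan {n m : ℕ} (p : Fin n → ℕ) (σ : Fin n → Fin m) : ℕ :=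
  Finset.univ.sup (load p σ)

/-- The optimal makespan of the instance. -/
noncomputable def optMakespan (n m : ℕ) (p : Fin n → ℕ) : ℕ :=
  sInf {t | ∃ σ : Fin n → Fin m, makespan p σ = t}

/-- The 0/1 assignment vector of a schedule, indexed by machine-job pairs. -/
def assignVec {n m : ℕ} (σ : Fin n → Fin m) : Fin m × Fin n → ℝ :=
  fun q => if σ q.2 = q.1 then 1 else 0

/-- `P(J,M)`: the convex hull of all points `(x^σ, T)` where `σ` is a schedule and the
natural number `T` upper-bounds every machine load; the `T`-coordinate is the `none`
coordinate of the ambient space `ℝ^(Option (M × J))`. -/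
def Ppoly (n m : ℕ) (p : Fin n → ℕ) : Set (Option (Fin m × Fin n) → ℝ) :=
  convexHull ℝ {z | ∃ (σ : Fin n → Fin m) (t : ℕ), (∀ i, load p σ i ≤ t) ∧
    z = fun q => Option.elim q (t : ℝ) (fun ij => assignVec σ ij)}

/-- **Farkas' lemma** for finitely many linear functionals. -/
theorem farkas_linear {I E : Type*} [AddCommGroup E] [Module ℝ E] [DecidableEq I] (s : Finset I) :
    ∀ (φ : I → E →ₗ[ℝ] ℝ) (ψ : E →ₗ[ℝ] ℝ), (∀ x, (∀ i ∈ s, φ i x ≤ 0) → ψ x ≤ 0) →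
      ∃ w : I → ℝ, (∀ i, 0 ≤ w i) ∧ ∀ x, ψ x = ∑ i ∈ s, w i * φ i x := by
  induction s using Finset.induction with
  | empty =>
    intro φ ψ h
    refine ⟨0, by simp, fun x => ?_⟩
    have h1 := h x (by simp)
    have h2 := h (-x) (by simp)
    rw [map_neg] at h2
    simp only [Finset.sum_empty]
    linarith
  | insert n s hn ih =>
    intro φ ψ h
    by_cases hs : ∀ x, (∀ i ∈ s, φ i x ≤ 0) → ψ x ≤ 0
    · obtain ⟨w, hw, hx⟩ := ih φ ψ hs
      refine ⟨fun i => if i = n then 0 else w i, fun i => ?_, fun x => ?_⟩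
      · dsimp only
        split_ifs
        exacts [le_rfl, hw i]
      · rw [Finset.sum_insert hn, hx]
        simp only [if_true, zero_mul, zero_add]
        refine Finset.sum_congr rfl fun i hi => ?_
        rw [if_neg (ne_of_mem_of_not_mem hi hn)]
    · push Not at hs
      obtain ⟨y, hy, hψ⟩ := hs
      have hφ : 0 < φ n y := by
        by_contra hle
        have := h y (fun i hi => by
          rcases Finset.mem_insert.1 hi with rfl | hi
          exacts [not_lt.1 hle, hy i hi])
        linarith
      set x₀ := (φ n y)⁻¹ • y with hx₀
      have hx₀s : ∀ i ∈ s, φ i x₀ ≤ 0 := fun i hi => by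
        rw [hx₀, map_smul, smul_eq_mul]
        exact mul_nonpos_of_nonneg_of_nonpos (inv_nonneg.2 hφ.le) (hy i hi)
      have hx₀n : φ n x₀ = 1 := by
        rw [hx₀, map_smul, smul_eq_mul, inv_mul_cancel₀ hφ.ne']
      have hx₀ψ : 0 ≤ ψ x₀ := by
        rw [hx₀, map_smul, smul_eq_mul]
        positivity
      obtain ⟨w, hw, hx⟩ := ih (fun i => φ i - φ i x₀ • φ n) (ψ - ψ x₀ • φ n) (fun x hx => by
        have := h (x - φ n x • x₀) (fun i hi => by
          rcases Finset.mem_insert.1 hi with rfl | hi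
          · simp [hx₀n]
          · have := hx i hi
            simp only [LinearMap.sub_apply, LinearMap.smul_apply, smul_eq_mul, map_sub,
              map_smul] at this ⊢
            linarith)
        simp only [LinearMap.sub_apply, LinearMap.smul_apply, smul_eq_mul, map_sub,
          map_smul] at this ⊢
        linarith)
      refine ⟨fun i => if i = n then ψ x₀ - ∑ j ∈ s, w j * φ j x₀ else w i, fun i => ?_,
        fun x => ?_⟩
      · dsimp only
        split_ifs
        · have : ∑ j ∈ s, w j * φ j x₀ ≤ 0 :=
            Finset.sum_nonpos fun j hj => mul_nonpos_of_nonneg_of_nonpos (hw j) (hx₀s j hj)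
          linarith
        · exact hw i
      · rw [Finset.sum_insert hn]
        dsimp only
        rw [if_pos rfl]
        have h1 : ∑ i ∈ s, (if i = n then ψ x₀ - ∑ j ∈ s, w j * φ j x₀ else w i) * φ i x =
            ∑ i ∈ s, w i * φ i x :=
          Finset.sum_congr rfl fun i hi => by rw [if_neg (ne_of_mem_of_not_mem hi hn)]
        have h2 := hx x
        simp only [LinearMap.sub_apply, LinearMap.smul_apply, smul_eq_mul, mul_sub,
          Finset.sum_sub_distrib] at h2
        have h3 : ∑ i ∈ s, w i * (φ i x₀ * φ n x) = (∑ i ∈ s, w i * φ i x₀) * φ n x := by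
          rw [Finset.sum_mul]
          exact Finset.sum_congr rfl fun i _ => by ring
        rw [h1]
        linarith

/-- **Farkas' lemma** for a consistent system of affine inequalities. -/
theorem farkas_affine {I E : Type*} [AddCommGroup E] [Module ℝ E] [Fintype I]
    (α : I → E →ₗ[ℝ] ℝ) (β : I → ℝ) (y₀ : E) (hy₀ : ∀ i, α i y₀ ≤ β i) (γ : E →ₗ[ℝ] ℝ) (δ : ℝ)
    (h : ∀ y, (∀ i, α i y ≤ β i) → γ y ≤ δ) :
    ∃ (w : I → ℝ) (κ : ℝ), (∀ i, 0 ≤ w i) ∧ 0 ≤ κ ∧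
      ∀ y, δ - γ y = ∑ i, w i * (β i - α i y) + κ := by
  classical
  let f : Option I → (E × ℝ) →ₗ[ℝ] ℝ := fun o => o.elim (-LinearMap.snd ℝ E ℝ)
    fun i => (α i).comp (LinearMap.fst ℝ E ℝ) - β i • LinearMap.snd ℝ E ℝ
  obtain ⟨w, hw, hx⟩ := farkas_linear Finset.univ f
    (γ.comp (LinearMap.fst ℝ E ℝ) - δ • LinearMap.snd ℝ E ℝ) (by
      rintro ⟨y, t⟩ hyt
      have ht : 0 ≤ t := by simpa [f] using hyt none (Finset.mem_univ _)
      have hα : ∀ i, α i y ≤ β i * t := fun i => by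
        simpa [f] using hyt (some i) (Finset.mem_univ _)
      have key : ∀ ε : ℝ, 0 < ε → γ y + ε * γ y₀ ≤ δ * (t + ε) := fun ε hε => by
        have hp : 0 < t + ε := by linarith
        have := h ((t + ε)⁻¹ • (y + ε • y₀)) (fun i => by
          rw [map_smul, map_add, map_smul, smul_eq_mul, smul_eq_mul, inv_mul_le_iff₀ hp]
          have := mul_le_mul_of_nonneg_left (hy₀ i) hε.le
          linarith [hα i])
        rw [map_smul, map_add, map_smul, smul_eq_mul, smul_eq_mul, inv_mul_le_iff₀ hp] at this
        linarith
      have : γ y ≤ δ * t := by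
        by_contra hlt
        push Not at hlt
        have h1 := key ((γ y - δ * t) / (2 * (|δ - γ y₀| + 1))) (by
          apply div_pos (by linarith) (by positivity))
        have h2 : (γ y - δ * t) / (2 * (|δ - γ y₀| + 1)) * (δ - γ y₀) ≤ (γ y - δ * t) / 2 := by
          rw [div_mul_eq_mul_div, div_le_div_iff₀ (by positivity) (by norm_num)]
          nlinarith [le_abs_self (δ - γ y₀)]
        linarith
      simpa using this)
  refine ⟨fun i => w (some i), w none, fun i => hw _, hw _, fun y => ?_⟩
  have := hx (y, 1)
  simp only [f, Fintype.sum_option, Option.elim, LinearMap.sub_apply, LinearMap.neg_apply,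
    LinearMap.smul_apply, LinearMap.comp_apply, LinearMap.fst_apply, LinearMap.snd_apply,
    smul_eq_mul, mul_one] at this
  have h2 : ∑ i, w (some i) * (β i - α i y) = -∑ i, w (some i) * (α i y - β i) := by
    rw [← Finset.sum_neg_distrib]
    exact Finset.sum_congr rfl fun i _ => by ring
  rw [h2]
  linarith

/-- **Yannakakis' factorization theorem**: the slack matrix of a set with an extended formulation
of size `k` has a nonnegative factorization with `k + 1` terms. -/
theorem IsEF.exists_factorization {ι A B : Type} [Fintype ι] {P : Set (ι → ℝ)} {k : ℕ}
    (hP : IsEF P k) (f : A → (ι → ℝ) →ᵃ[ℝ] ℝ) (hf : ∀ a, ∀ z ∈ P, 0 ≤ f a z)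
    (z : B → ι → ℝ) (hz : ∀ b, z b ∈ P) :
    ∃ (u : Option (Fin k) → A → ℝ) (v : Option (Fin k) → B → ℝ),
      (∀ r a, 0 ≤ u r a) ∧ (∀ r b, 0 ≤ v r b) ∧ ∀ a b, f a (z b) = ∑ r, u r a * v r b := by
  obtain ⟨e, l, M, b, C, d, π, rfl⟩ := hP
  choose y hy hyz using hz
  by_cases hB : Nonempty B
  swap
  · exact ⟨0, 0, by simp, by simp, fun _ b => (hB ⟨b⟩).elim⟩
  obtain ⟨b₀⟩ := hB
  have main : ∀ a, ∃ (w : Fin k → ℝ) (κ : ℝ), (∀ i, 0 ≤ w i) ∧ 0 ≤ κ ∧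
      ∀ b', f a (z b') = ∑ i, w i * (b i - M.mulVec (y b') i) + κ := by
    intro a
    let g := (f a).comp π
    have hg : ∀ x, g x = g.linear x + g 0 := fun x => by
      simpa using g.map_vadd 0 x
    obtain ⟨w, κ, hw, hκ, h⟩ := farkas_affine (I := Fin k ⊕ Fin l ⊕ Fin l)
      (Sum.elim (fun i => LinearMap.proj i ∘ₗ M.mulVecLin)
        (Sum.elim (fun i => LinearMap.proj i ∘ₗ C.mulVecLin)
          fun i => -(LinearMap.proj i ∘ₗ C.mulVecLin)))
      (Sum.elim b (Sum.elim d (-d))) (y b₀)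
      (by
        rintro (i | i | i)
        · simpa using (hy b₀).1 i
        · simpa using ((hy b₀).2 i).le
        · simpa using ((hy b₀).2 i).ge)
      (-g.linear) (g 0) (by
        intro x hx
        have := hf a (π x) ⟨x, ⟨fun i => by simpa using hx (Sum.inl i), fun i => le_antisymm
          (by simpa using hx (Sum.inr (Sum.inl i)))
          (by simpa using hx (Sum.inr (Sum.inr i)))⟩, rfl⟩
        have h2 := hg x
        simp only [g, AffineMap.comp_apply] at h2 this
        simp only [LinearMap.neg_apply, g]
        simp only [AffineMap.comp_apply]
        linarith)
    refine ⟨fun i => w (Sum.inl i), κ, fun i => hw _, hκ, fun b' => ?_⟩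
    have h1 := h (y b')
    have h2 := hg (y b')
    have h3 : g (y b') = f a (z b') := by simp [g, hyz]
    simp only [Fintype.sum_sum_type, Sum.elim_inl, Sum.elim_inr, LinearMap.neg_apply,
      LinearMap.comp_apply, LinearMap.proj_apply, Matrix.mulVecLin_apply, (hy b').2, Pi.neg_apply,
      sub_self, mul_zero, Finset.sum_const_zero, add_zero] at h1
    linarith
  choose w κ hw hκ h using main
  refine ⟨fun r a => r.elim (κ a) (w a), fun r b' => r.elim 1 fun i => b i - M.mulVec (y b') i,
    ?_, ?_, ?_⟩
  · rintro (_ | i) a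
    exacts [hκ a, hw a i]
  · rintro (_ | i) b'
    exacts [zero_le_one, sub_nonneg.2 ((hy b').1 i)]
  · intro a b'
    rw [Fintype.sum_option, h a b']
    simp [add_comm]

theorem exists_exp_add_exp_lt_two : ∃ c : ℝ, 0 < c ∧ Real.exp (10 * c) + Real.exp (-(11 * c)) < 2 := by
  refine ⟨1 / 442, by norm_num, ?_⟩
  have h1 := (abs_le.1 (Real.abs_exp_sub_one_sub_id_le (x := 10 * (1 / 442)) (by
    rw [abs_le]; constructor <;> norm_num))).2
  have h2 := (abs_le.1 (Real.abs_exp_sub_one_sub_id_le (x := -(11 * (1 / 442))) (by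
    rw [abs_le]; constructor <;> norm_num))).2
  norm_num at h1 h2 ⊢
  linarith

/-- A set of bit strings in which every coordinate of `Q` is biased towards `false` is
exponentially small in `#Q`. -/
theorem exists_card_le_of_biased : ∃ θ : ℝ, 0 < θ ∧ θ < 1 ∧
    ∀ (ι : Type) [Fintype ι] [DecidableEq ι] (Z : Finset (ι → Bool)) (Q : Finset ι),
      (∀ f ∈ Q, 11 * (#{z ∈ Z | z f = true} : ℝ) ≤ 10 * (#{z ∈ Z | z f = false} : ℝ)) →
      (#Z : ℝ) ≤ 2 ^ Fintype.card ι * θ ^ #Q := by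
  obtain ⟨c, hc, hlt⟩ := exists_exp_add_exp_lt_two
  refine ⟨(Real.exp (10 * c) + Real.exp (-(11 * c))) / 2, by positivity, by linarith, ?_⟩
  intro ι _ _ Z Q hQ
  set e : Bool → ℝ := fun b => if b then -(11 * c) else 10 * c with he
  have hall : ∑ z : ι → Bool, ∏ f, (if f ∈ Q then Real.exp (e (z f)) else 1) =
      2 ^ Fintype.card ι * ((Real.exp (10 * c) + Real.exp (-(11 * c))) / 2) ^ #Q := by
    rw [← Fintype.piFinset_univ, ← Finset.prod_univ_sum (fun _ => (Finset.univ : Finset Bool))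
      (fun f b => if f ∈ Q then Real.exp (e b) else 1)]
    have : ∀ f, ∑ b : Bool, (if f ∈ Q then Real.exp (e b) else 1) =
        2 * (if f ∈ Q then (Real.exp (10 * c) + Real.exp (-(11 * c))) / 2 else 1) := fun f => by
      rw [Fintype.sum_bool]
      split_ifs
      · simp only [he, if_true, Bool.false_eq_true, if_false]
        ring
      · norm_num
    simp_rw [this, Finset.prod_mul_distrib, Finset.prod_const, Finset.card_univ]
    rw [Finset.prod_ite_mem, Finset.univ_inter, Finset.prod_const]
  have hterm : ∀ z : ι → Bool, 1 + ∑ f ∈ Q, e (z f) ≤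
      ∏ f, (if f ∈ Q then Real.exp (e (z f)) else 1) := fun z => by
    rw [Finset.prod_ite_mem, Finset.univ_inter, ← Real.exp_sum, add_comm]
    exact Real.add_one_le_exp _
  have hswap : 0 ≤ ∑ z ∈ Z, ∑ f ∈ Q, e (z f) := by
    rw [Finset.sum_comm]
    refine Finset.sum_nonneg fun f hf => ?_
    have : ∑ z ∈ Z, e (z f) = 10 * c * #{z ∈ Z | z f = false} - 11 * c * #{z ∈ Z | z f = true} := by
      rw [Finset.sum_ite, Finset.sum_const, Finset.sum_const]
      simp only [nsmul_eq_mul, Bool.not_eq_true]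
      ring
    rw [this]
    nlinarith [hQ f hf]
  calc (#Z : ℝ) ≤ ∑ z ∈ Z, (1 + ∑ f ∈ Q, e (z f)) := by
        rw [Finset.sum_add_distrib]
        simpa using hswap
    _ ≤ ∑ z ∈ Z, ∏ f, (if f ∈ Q then Real.exp (e (z f)) else 1) :=
        Finset.sum_le_sum fun z _ => hterm z
    _ ≤ ∑ z : ι → Bool, ∏ f, (if f ∈ Q then Real.exp (e (z f)) else 1) := by
        refine Finset.sum_le_sum_of_subset_of_nonneg (Finset.subset_univ _) fun z _ _ => ?_
        exact Finset.prod_nonneg fun f _ => by split_ifs <;> positivity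
    _ = _ := hall

theorem card_filter_false_add_true {ι : Type} (Z : Finset (ι → Bool)) (f : ι) :
    (#{z ∈ Z | z f = false} : ℝ) + #{z ∈ Z | z f = true} = #Z := by
  rw [← Finset.card_filter_add_card_filter_not (s := Z) (fun z => z f = false)]
  push_cast
  simp

/-- The strings of `Z` that are `false` at a coordinate biased towards `false` make up a small
part of `Z`, up to an exponentially small error. -/
theorem exists_sum_biased_le : ∃ θ : ℝ, 0 < θ ∧ θ < 1 ∧
    ∀ (ι : Type) [Fintype ι] [DecidableEq ι] (Z : Finset (ι → Bool)),
      ∑ f, (if 11 * (#{z ∈ Z | z f = true} : ℝ) ≤ 10 * (#{z ∈ Z | z f = false} : ℝ) then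
        (#{z ∈ Z | z f = false} : ℝ) else 0) ≤
      1 / 200 * ∑ f, ((#{z ∈ Z | z f = false} : ℝ) + #{z ∈ Z | z f = true}) +
        Fintype.card ι * (2 ^ Fintype.card ι * θ ^ (Fintype.card ι / 200)) := by
  obtain ⟨θ, h0, h1, h⟩ := exists_card_le_of_biased
  refine ⟨θ, h0, h1, fun ι _ _ Z => ?_⟩
  simp_rw [card_filter_false_add_true]
  rw [← Finset.sum_filter, Finset.sum_const, Finset.card_univ, nsmul_eq_mul]
  set Q : Finset ι := {f | 11 * (#{z ∈ Z | z f = true} : ℝ) ≤ 10 * (#{z ∈ Z | z f = false} : ℝ)}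
  have hle : ∑ f ∈ Q, (#{z ∈ Z | z f = false} : ℝ) ≤ #Q * #Z := by
    rw [← nsmul_eq_mul]
    exact Finset.sum_le_card_nsmul _ _ _ fun f _ => by exact_mod_cast Finset.card_filter_le _ _
  refine hle.trans ?_
  have hZ : (0 : ℝ) ≤ #Z := Nat.cast_nonneg _
  rcases le_or_gt (200 * #Q) (Fintype.card ι) with hq | hq
  · have hq' : (200 : ℝ) * #Q ≤ Fintype.card ι := by exact_mod_cast hq
    have : (0 : ℝ) ≤ Fintype.card ι * (2 ^ Fintype.card ι * θ ^ (Fintype.card ι / 200)) := by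
      positivity
    nlinarith
  · have hcard := h ι Z Q (fun f hf => (Finset.mem_filter.1 hf).2)
    have hQ : (#Q : ℝ) ≤ Fintype.card ι := by exact_mod_cast Finset.card_le_univ Q
    have hθ : θ ^ #Q ≤ θ ^ (Fintype.card ι / 200) :=
      pow_le_pow_of_le_one h0.le h1.le (by omega)
    calc (#Q : ℝ) * #Z ≤ Fintype.card ι * (2 ^ Fintype.card ι * θ ^ (Fintype.card ι / 200)) := by
          gcongr
          exact hcard.trans (by gcongr)
      _ ≤ _ := le_add_of_nonneg_left (by positivity)

/-- `exists_sum_biased_le`, averaged over a family of sets of strings whose coordinates are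
exchangeable. -/
theorem exists_sum_biased_mul_le : ∃ θ : ℝ, 0 < θ ∧ θ < 1 ∧
    ∀ (Ω ι : Type) [Fintype Ω] [Fintype ι] [DecidableEq ι] (Z : Ω → Finset (ι → Bool)) (o : ι)
      (s : ι → Equiv.Perm Ω) (y : Ω → ℝ) (K : ℝ), (∀ g, 0 ≤ y g) → (∀ g, y g ≤ K) →
      (∀ f g, y (s f g) = y g) →
      (∀ f g b, #{z ∈ Z (s f g) | z o = b} = #{z ∈ Z g | z f = b}) →
      ∑ g, (if 11 * (#{z ∈ Z g | z o = true} : ℝ) ≤ 10 * (#{z ∈ Z g | z o = false} : ℝ) then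
        (#{z ∈ Z g | z o = false} : ℝ) else 0) * y g ≤
      1 / 200 * ∑ g, ((#{z ∈ Z g | z o = false} : ℝ) + #{z ∈ Z g | z o = true}) * y g +
        Fintype.card Ω * (2 ^ Fintype.card ι * θ ^ (Fintype.card ι / 200)) * K := by
  obtain ⟨θ, h0, h1, h⟩ := exists_sum_biased_le
  refine ⟨θ, h0, h1, fun Ω ι _ _ _ Z o s y K hy hyK hs hZ => ?_⟩
  have havg : ∀ F : Ω → ℝ, Fintype.card ι * ∑ g, F g = ∑ g, ∑ f, F (s f g) := fun F => by
    rw [Finset.sum_comm]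
    simp_rw [fun f => Equiv.sum_comp (s f) F]
    simp
  have hι : (0 : ℝ) < Fintype.card ι := by
    exact_mod_cast Fintype.card_pos_iff.2 ⟨o⟩
  refine le_of_mul_le_mul_left ?_ hι
  rw [mul_add, havg, mul_left_comm, havg]
  simp_rw [hs, hZ, ← Finset.sum_mul]
  set E : ℝ := 2 ^ Fintype.card ι * θ ^ (Fintype.card ι / 200)
  have hE : 0 ≤ E := by positivity
  calc _ ≤ ∑ g, (1 / 200 * ∑ f, ((#{z ∈ Z g | z f = false} : ℝ) + #{z ∈ Z g | z f = true}) +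
        Fintype.card ι * E) * y g :=
        Finset.sum_le_sum fun g _ => mul_le_mul_of_nonneg_right (h ι (Z g)) (hy g)
    _ = 1 / 200 * ∑ g, (∑ f, ((#{z ∈ Z g | z f = false} : ℝ) + #{z ∈ Z g | z f = true})) * y g +
        Fintype.card ι * E * ∑ g, y g := by
        simp_rw [add_mul, Finset.sum_add_distrib, Finset.mul_sum, mul_assoc]
    _ ≤ _ := by
        have : ∑ g, y g ≤ Fintype.card Ω * K := by
          rw [← Finset.card_univ, ← nsmul_eq_mul]
          exact Finset.sum_le_card_nsmul _ _ _ fun g _ => hyK g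
        have h2 := mul_le_mul_of_nonneg_left this (mul_nonneg hι.le hE)
        linarith

theorem sum_le_of_pentagon {Q a b c d e : ℝ} (ha : a ≤ Q) (hb : b ≤ Q) (hc : c ≤ Q) (hd : d ≤ Q)
    (he : e ≤ Q) (hac : a = 0 ∨ c = 0) (hbd : b = 0 ∨ d = 0) (hce : c = 0 ∨ e = 0)
    (hda : d = 0 ∨ a = 0) (heb : e = 0 ∨ b = 0) : a + b + c + d + e ≤ 2 * Q := by
  rcases hac with h | h <;> rcases hbd with h' | h' <;> rcases hce with h'' | h'' <;>
    rcases hda with h3 | h3 <;> rcases heb with h4 | h4 <;> linarith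

/-- If `x₀ (r² g) * y₀ g` always vanishes for a symmetry `r` of order five, then at most two of
five consecutive products `x₀ * y₀` are nonzero. -/
theorem sum_balanced_mul_le {Ω : Type} [Fintype Ω] (r : Equiv.Perm Ω)
    (hr : ∀ g, r (r (r (r (r g)))) = g) (x₀ x₁ y₀ y₁ : Ω → ℝ)
    (hx₁ : ∀ g, 0 ≤ x₁ g) (hy₀ : ∀ g, 0 ≤ y₀ g) (hy₁ : ∀ g, 0 ≤ y₁ g)
    (hrx : ∀ g, x₁ (r g) = x₁ g) (hry : ∀ g, y₁ (r g) = y₁ g)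
    (hxy : ∀ g, x₀ (r (r g)) = 0 ∨ y₀ g = 0) :
    ∑ g, (if 10 * x₀ g ≤ 11 * x₁ g ∧ 10 * y₀ g ≤ 11 * y₁ g then x₀ g * y₀ g else 0) ≤
      121 / 250 * ∑ g, x₁ g * y₁ g := by
  set h : Ω → ℝ := fun g =>
    if 10 * x₀ g ≤ 11 * x₁ g ∧ 10 * y₀ g ≤ 11 * y₁ g then x₀ g * y₀ g else 0 with hh
  have hrot : ∀ F : Ω → ℝ, ∑ g, F (r g) = ∑ g, F g := fun F => Equiv.sum_comp r F
  have h1 := hrot h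
  have h2 := hrot (fun g => h (r g))
  have h3 := hrot (fun g => h (r (r g)))
  have h4 := hrot (fun g => h (r (r (r g))))
  have hle : ∀ g, h g ≤ 121 / 100 * (x₁ g * y₁ g) := fun g => by
    simp only [hh]
    split_ifs with hg
    · have := mul_le_mul hg.1 hg.2 (mul_nonneg (by norm_num) (hy₀ g))
        (mul_nonneg (by norm_num) (hx₁ g))
      linarith
    · exact mul_nonneg (by norm_num) (mul_nonneg (hx₁ g) (hy₁ g))
  have hzero : ∀ g, h g = 0 ∨ h (r (r g)) = 0 := fun g => by
    simp only [hh]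
    rcases hxy g with h' | h' <;> simp [h']
  have key : ∀ g, h g + h (r g) + h (r (r g)) + h (r (r (r g))) + h (r (r (r (r g)))) ≤
      2 * (121 / 100 * (x₁ g * y₁ g)) := fun g => by
    have b1 := hle (r g)
    have b2 := hle (r (r g))
    have b3 := hle (r (r (r g)))
    have b4 := hle (r (r (r (r g))))
    have z3 := hzero (r (r (r g)))
    have z4 := hzero (r (r (r (r g))))
    simp only [hrx, hry, hr] at b1 b2 b3 b4 z3 z4
    exact sum_le_of_pentagon (hle g) b1 b2 b3 b4 (hzero g) (hzero (r g))
      (hzero (r (r g))) z3 z4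
  have := Finset.sum_le_sum fun g (_ : g ∈ Finset.univ) => key g
  simp only [Finset.sum_add_distrib, ← Finset.mul_sum] at this
  linarith

/-- The rectangle bound in abstract form. -/
theorem exists_rectangle_bound : ∃ θ : ℝ, 0 < θ ∧ θ < 1 ∧
    ∀ (Ω ι : Type) [Fintype Ω] [Fintype ι] [DecidableEq ι] (Z W : Ω → Finset (ι → Bool)) (o : ι)
      (s t : ι → Equiv.Perm Ω) (r : Equiv.Perm Ω) (x y : Bool → Ω → ℝ),
      (∀ b g, x b g = #{z ∈ Z g | z o = b}) → (∀ b g, y b g = #{w ∈ W g | w o = b}) →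
      (∀ f g b, #{z ∈ Z (s f g) | z o = b} = #{z ∈ Z g | z f = b}) →
      (∀ f g, y false (s f g) = y false g) →
      (∀ f g b, #{w ∈ W (t f g) | w o = b} = #{w ∈ W g | w f = b}) →
      (∀ f g, x false (t f g) = x false g) →
      (∀ g, r (r (r (r (r g)))) = g) →
      (∀ g, x true (r g) = x true g) → (∀ g, y true (r g) = y true g) →
      (∀ g, x false (r (r g)) = 0 ∨ y false g = 0) →
      198 / 200 * ∑ g, x false g * y false g - 1 / 200 * ∑ g, x true g * y false g -
        1 / 200 * ∑ g, x false g * y true g - 121 / 250 * ∑ g, x true g * y true g ≤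
      2 * (Fintype.card Ω * 4 ^ Fintype.card ι * θ ^ (Fintype.card ι / 200)) := by
  obtain ⟨θ, h0, h1, h⟩ := exists_sum_biased_mul_le
  refine ⟨θ, h0, h1, fun Ω ι _ _ _ Z W o s t r x y hx hy hs hsy ht htx hr hrx hry hxy => ?_⟩
  have hcard : ∀ (A : Ω → Finset (ι → Bool)) b g,
      (#{z ∈ A g | z o = b} : ℝ) ≤ 2 ^ Fintype.card ι := fun A b g => by
    have : #{z ∈ A g | z o = b} ≤ 2 ^ Fintype.card ι :=
      (Finset.card_le_univ _).trans (by simp)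
    exact_mod_cast this
  have hx0 : ∀ b g, 0 ≤ x b g := fun b g => by rw [hx]; positivity
  have hy0 : ∀ b g, 0 ≤ y b g := fun b g => by rw [hy]; positivity
  have e1 := h Ω ι Z o s (y false) (2 ^ Fintype.card ι) (hy0 _)
    (fun g => by rw [hy]; exact hcard W _ g) hsy hs
  have e2 := h Ω ι W o t (x false) (2 ^ Fintype.card ι) (hx0 _)
    (fun g => by rw [hx]; exact hcard Z _ g) htx ht
  have e3 := sum_balanced_mul_le r hr (x false) (x true) (y false) (y true) (hx0 _)
    (hy0 _) (hy0 _) hrx hry hxy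
  simp only [← hx, ← hy] at e1 e2
  have key : ∀ g, x false g * y false g ≤
      (if 10 * x false g ≤ 11 * x true g ∧ 10 * y false g ≤ 11 * y true g then
        x false g * y false g else 0) +
      (if 11 * x true g ≤ 10 * x false g then x false g else 0) * y false g +
      (if 11 * y true g ≤ 10 * y false g then y false g else 0) * x false g := fun g => by
    have := mul_nonneg (hx0 false g) (hy0 false g)
    split_ifs <;> first | linarith | (exfalso; grind)
  have e4 := Finset.sum_le_sum fun g (_ : g ∈ Finset.univ) => key g
  simp only [Finset.sum_add_distrib, add_mul] at e1 e2 e4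
  have c1 : ∑ g, y false g * x false g = ∑ g, x false g * y false g :=
    Finset.sum_congr rfl fun g _ => mul_comm _ _
  have c2 : ∑ g, y true g * x false g = ∑ g, x false g * y true g :=
    Finset.sum_congr rfl fun g _ => mul_comm _ _
  have c3 : (4 : ℝ) ^ Fintype.card ι = 2 ^ Fintype.card ι * 2 ^ Fintype.card ι := by
    rw [← mul_pow]; norm_num
  rw [c1, c2] at e2
  rw [c3]
  linarith

/-- The number of `v` in the set `a` that are fixed by `τ` or mapped outside `a`. -/
def cutCost {V : Type} [Fintype V] [DecidableEq V] (a : V → Bool) (τ : V → V) : ℕ :=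
  #{v | a v = true ∧ (τ v = v ∨ a (τ v) = false)}

theorem cutCost_conj {U V : Type} [Fintype U] [DecidableEq U] [Fintype V] [DecidableEq V]
    (g : U ≃ V) (a : U → Bool) (τ : U → U) :
    cutCost (a ∘ g.symm) (g ∘ τ ∘ g.symm) = cutCost a τ := by
  unfold cutCost
  refine (Finset.card_equiv g fun v => ?_).symm
  simp

theorem card_filter_comp_symm {U V : Type} [Fintype U] [Fintype V] (g : U ≃ V) (a : U → Bool) :
    #{v | (a ∘ g.symm) v = true} = #{v | a v = true} :=
  (Finset.card_equiv g fun v => by simp).symm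

/-- Precomposition with a permutation of the domain, as a permutation of the equivalences. -/
def precomp {U : Type} (V : Type) (ρ : Equiv.Perm U) : Equiv.Perm (U ≃ V) where
  toFun g := ρ.trans g
  invFun g := ρ.symm.trans g
  left_inv g := by ext; simp
  right_inv g := by ext; simp

/-- Names of pairs of vertices: a special pair `none` and two families of `m` pairs. -/
abbrev Slot (m : ℕ) := Option (Fin m ⊕ Fin m)

/-- A vertex set consisting of a triple and of `2 * m + 1` pairs. -/
abbrev Base (m : ℕ) := Fin 3 ⊕ (Slot m × Bool)

/-- Extension by `false` of a string along an injection. -/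
def spread {m : ℕ} (j : Option (Fin m) → Slot m) (z : Option (Fin m) → Bool) : Slot m → Bool :=
  Function.extend j z fun _ => false

/-- The set consisting of the triple and of the pairs selected by `a`. -/
def cutVec {m : ℕ} (a : Slot m → Bool) : Base m → Bool :=
  Sum.elim (fun _ => true) fun p => a p.1

/-- The involution fixing the triple and the pairs selected by `w`, and swapping the elements of
each other pair. -/
def pairing {m : ℕ} (w : Slot m → Bool) : Base m → Base m :=
  Sum.map id fun p => (p.1, bif w p.1 then p.2 else !p.2)

theorem pairing_involutive {m : ℕ} (w : Slot m → Bool) : Function.Involutive (pairing w) := by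
  rintro (h | ⟨i, c⟩)
  · rfl
  · cases hw : w i <;> simp [pairing, hw]

/-- The permutation exchanging two pairs. -/
def slotSwap {m : ℕ} (i j : Slot m) : Equiv.Perm (Base m) :=
  Equiv.sumCongr (Equiv.refl _) (Equiv.prodCongr (Equiv.swap i j) (Equiv.refl _))

theorem cutVec_comp_slotSwap {m : ℕ} (i j : Slot m) (a : Slot m → Bool) :
    cutVec a ∘ (slotSwap i j).symm = cutVec (a ∘ Equiv.swap i j) := by
  funext v
  rcases v with h | ⟨k, c⟩ <;> simp [cutVec, slotSwap]

theorem slotSwap_conj_pairing {m : ℕ} (i j : Slot m) (w : Slot m → Bool) :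
    slotSwap i j ∘ pairing w ∘ (slotSwap i j).symm = pairing (w ∘ Equiv.swap i j) := by
  funext v
  rcases v with h | ⟨k, c⟩ <;> simp [pairing, slotSwap]

theorem spread_comp_swap {m : ℕ} {j : Option (Fin m) → Slot m} (hj : Function.Injective j)
    (o f : Option (Fin m)) (z : Option (Fin m) → Bool) :
    spread j z ∘ Equiv.swap (j o) (j f) = spread j (z ∘ Equiv.swap o f) := by
  funext i
  by_cases hi : ∃ k, j k = i
  · obtain ⟨k, rfl⟩ := hi
    simp only [Function.comp_apply, spread, ← hj.map_swap, hj.extend_apply]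
  · have h1 : i ≠ j o := fun h => hi ⟨o, h.symm⟩
    have h2 : i ≠ j f := fun h => hi ⟨f, h.symm⟩
    simp only [Function.comp_apply, spread, Equiv.swap_apply_of_ne_of_ne h1 h2,
      Function.extend_apply' _ _ _ hi]

/-- The five-cycle through the triple and the special pair. -/
def rot {m : ℕ} : Equiv.Perm (Base m) where
  toFun
    | .inl 0 => .inl 1
    | .inl 1 => .inl 2
    | .inl 2 => .inr (none, false)
    | .inr (none, false) => .inr (none, true)
    | .inr (none, true) => .inl 0
    | .inr (some i, c) => .inr (some i, c)
  invFun
    | .inl 0 => .inr (none, true)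
    | .inl 1 => .inl 0
    | .inl 2 => .inl 1
    | .inr (none, false) => .inl 2
    | .inr (none, true) => .inr (none, false)
    | .inr (some i, c) => .inr (some i, c)
  left_inv := by
    rintro (h | ⟨_ | i, _ | _⟩)
    · fin_cases h <;> rfl
    all_goals rfl
  right_inv := by
    rintro (h | ⟨_ | i, _ | _⟩)
    · fin_cases h <;> rfl
    all_goals rfl

theorem rot_five {m : ℕ} (v : Base m) : rot (rot (rot (rot (rot v)))) = v := by
  rcases v with h | ⟨_ | i, _ | _⟩
  · fin_cases h <;> rfl
  all_goals rfl

theorem cutVec_comp_rot {m : ℕ} (a : Slot m → Bool) (ha : a none = true) :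
    cutVec a ∘ rot.symm = cutVec a := by
  funext v
  rcases v with h | ⟨_ | i, _ | _⟩
  · fin_cases h
    · exact ha
    all_goals rfl
  · exact ha.symm
  all_goals rfl

theorem rot_conj_pairing {m : ℕ} (w : Slot m → Bool) (hw : w none = true) :
    rot ∘ pairing w ∘ rot.symm = pairing w := by
  funext v
  rcases v with h | ⟨_ | i, c⟩
  · fin_cases h <;> simp [pairing, rot, hw]
  · cases c <;> simp [pairing, rot, hw]
  · simp [pairing, rot]

theorem odd_card_cutVec {m : ℕ} (a : Slot m → Bool) : Odd #{v | cutVec a v = true} := by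
  refine ⟨1 + #{i | a i = true}, ?_⟩
  have : ∀ i, ∑ c : Bool, (if cutVec a (.inr (i, c)) = true then 1 else 0) =
      2 * (if a i = true then 1 else 0) := fun i => by
    cases hi : a i <;> simp [cutVec, hi]
  rw [Finset.card_filter, Fintype.sum_sum_type, Fintype.sum_prod_type, Finset.card_filter]
  simp only [this, ← Finset.mul_sum]
  simp only [cutVec, Sum.elim_inl, if_true, Fin.sum_univ_three]
  ring

theorem cutCost_cutVec_pairing {m : ℕ} (a w : Slot m → Bool)
    (h : ∀ i, a (some i) = false ∨ w (some i) = false) :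
    cutCost (cutVec a) (pairing w) = if a none = true ∧ w none = true then 5 else 3 := by
  unfold cutCost
  rw [Finset.card_filter, Fintype.sum_sum_type, Fintype.sum_prod_type, Fintype.sum_option]
  have : ∀ i c, (if cutVec a (.inr (some i, c)) = true ∧
      (pairing w (.inr (some i, c)) = .inr (some i, c) ∨
        cutVec a (pairing w (.inr (some i, c))) = false) then 1 else 0) = 0 := fun i c => by
    rcases h i with h | h <;> simp [cutVec, pairing, h]
  simp only [this]
  cases ha : a none <;> cases hw : w none <;> simp [cutVec, pairing, ha, hw]

theorem cutCost_cutVec_comp_rot {m : ℕ} (a w : Slot m → Bool)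
    (h : ∀ i, a (some i) = false ∨ w (some i) = false) (ha : a none = false)
    (hw : w none = false) :
    cutCost (cutVec a ∘ rot.symm ∘ rot.symm) (pairing w) = 1 := by
  set b := cutVec a ∘ rot.symm ∘ rot.symm
  have b0 : b (.inl 0) = false := ha
  have b1 : b (.inl 1) = false := ha
  have b2 : b (.inl 2) = true := rfl
  have b3 : ∀ c, b (.inr (none, c)) = true := by rintro (_ | _) <;> rfl
  have b4 : ∀ i c, b (.inr (some i, c)) = a (some i) := fun i c => rfl
  unfold cutCost
  rw [Finset.card_filter, Fintype.sum_sum_type, Fintype.sum_prod_type, Fintype.sum_option]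
  have : ∀ i c, (if b (.inr (some i, c)) = true ∧
      (pairing w (.inr (some i, c)) = .inr (some i, c) ∨
        b (pairing w (.inr (some i, c))) = false) then 1 else 0) = 0 := fun i c => by
    rcases h i with h | h <;> simp [pairing, b4, h]
  simp only [this, Fin.sum_univ_three, Fintype.sum_bool]
  simp [pairing, b0, b1, b2, b3, hw]

/-- The names of the pairs in the first family together with the special pair. -/
def slotL {m : ℕ} : Option (Fin m) → Slot m := Option.map Sum.inl

/-- The names of the pairs in the second family together with the special pair. -/
def slotR {m : ℕ} : Option (Fin m) → Slot m := Option.map Sum.inr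

theorem slotL_injective {m : ℕ} : Function.Injective (slotL (m := m)) :=
  Option.map_injective Sum.inl_injective

theorem slotR_injective {m : ℕ} : Function.Injective (slotR (m := m)) :=
  Option.map_injective Sum.inr_injective

theorem spread_slotL_none {m : ℕ} (z : Option (Fin m) → Bool) : spread slotL z none = z none :=
  slotL_injective.extend_apply z _ none

theorem spread_slotR_none {m : ℕ} (z : Option (Fin m) → Bool) : spread slotR z none = z none :=
  slotR_injective.extend_apply z _ none

theorem spread_slotL_inr {m : ℕ} (z : Option (Fin m) → Bool) (i : Fin m) :
    spread slotL z (some (.inr i)) = false := by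
  refine Function.extend_apply' _ _ _ ?_
  rintro ⟨_ | k, hk⟩ <;> simp [slotL] at hk

theorem spread_slotR_inl {m : ℕ} (z : Option (Fin m) → Bool) (i : Fin m) :
    spread slotR z (some (.inl i)) = false := by
  refine Function.extend_apply' _ _ _ ?_
  rintro ⟨_ | k, hk⟩ <;> simp [slotR] at hk

theorem comp_swap_eq_self {I α : Type} [DecidableEq I] (f : I → α) {i j : I} (h : f i = f j) :
    f ∘ Equiv.swap i j = f := by
  funext k
  by_cases hi : k = i
  · simp [hi, h]
  by_cases hj : k = j
  · simp [hj, h]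
  · simp [Equiv.swap_apply_of_ne_of_ne hi hj]

theorem spread_slotL_comp_swap {m : ℕ} (z : Option (Fin m) → Bool) (hz : z none = false)
    (f : Option (Fin m)) : spread slotL z ∘ Equiv.swap none (slotR f) = spread slotL z := by
  refine comp_swap_eq_self _ ?_
  rcases f with _ | i
  · rfl
  · exact (spread_slotL_none z).trans (hz.trans (spread_slotL_inr z i).symm)

theorem spread_slotR_comp_swap {m : ℕ} (z : Option (Fin m) → Bool) (hz : z none = false)
    (f : Option (Fin m)) : spread slotR z ∘ Equiv.swap none (slotL f) = spread slotR z := by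
  refine comp_swap_eq_self _ ?_
  rcases f with _ | i
  · rfl
  · exact (spread_slotR_none z).trans (hz.trans (spread_slotR_inl z i).symm)

theorem spread_slotL_or_spread_slotR {m : ℕ} (z w : Option (Fin m) → Bool) (i : Fin m ⊕ Fin m) :
    spread slotL z (some i) = false ∨ spread slotR w (some i) = false := by
  rcases i with i | i
  · exact .inr (spread_slotR_inl w i)
  · exact .inl (spread_slotL_inr z i)

/-- The copy in `V` of the set consisting of the triple and of the pairs selected by `z`. -/
def row {m : ℕ} {V : Type} (g : Base m ≃ V) (z : Option (Fin m) → Bool) : V → Bool :=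
  cutVec (spread slotL z) ∘ g.symm

/-- The copy in `V` of the involution fixing the triple and the pairs selected by `w`. -/
def col {m : ℕ} {V : Type} (g : Base m ≃ V) (w : Option (Fin m) → Bool) : V → V :=
  g ∘ pairing (spread slotR w) ∘ g.symm

theorem row_precomp {m : ℕ} {V : Type} (ρ : Equiv.Perm (Base m)) (g : Base m ≃ V)
    (z : Option (Fin m) → Bool) :
    row (precomp V ρ g) z = (cutVec (spread slotL z) ∘ ρ.symm) ∘ g.symm := rfl

theorem col_precomp {m : ℕ} {V : Type} (ρ : Equiv.Perm (Base m)) (g : Base m ≃ V)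
    (w : Option (Fin m) → Bool) :
    col (precomp V ρ g) w = g ∘ (ρ ∘ pairing (spread slotR w) ∘ ρ.symm) ∘ g.symm := rfl

theorem row_swap {m : ℕ} {V : Type} (f : Option (Fin m)) (g : Base m ≃ V)
    (z : Option (Fin m) → Bool) :
    row (precomp V (slotSwap none (slotL f)) g) z = row g (z ∘ Equiv.swap none f) := by
  rw [row_precomp, cutVec_comp_slotSwap, row, ← spread_comp_swap slotL_injective]
  rfl

theorem col_swap {m : ℕ} {V : Type} (f : Option (Fin m)) (g : Base m ≃ V)
    (w : Option (Fin m) → Bool) :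
    col (precomp V (slotSwap none (slotR f)) g) w = col g (w ∘ Equiv.swap none f) := by
  rw [col_precomp, slotSwap_conj_pairing, col, ← spread_comp_swap slotR_injective]
  rfl

theorem row_swap_of_false {m : ℕ} {V : Type} (f : Option (Fin m)) (g : Base m ≃ V)
    (z : Option (Fin m) → Bool) (hz : z none = false) :
    row (precomp V (slotSwap none (slotR f)) g) z = row g z := by
  rw [row_precomp, cutVec_comp_slotSwap, row, spread_slotL_comp_swap z hz]

theorem col_swap_of_false {m : ℕ} {V : Type} (f : Option (Fin m)) (g : Base m ≃ V)
    (w : Option (Fin m) → Bool) (hw : w none = false) :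
    col (precomp V (slotSwap none (slotL f)) g) w = col g w := by
  rw [col_precomp, slotSwap_conj_pairing, col, spread_slotR_comp_swap w hw]

theorem row_rot {m : ℕ} {V : Type} (g : Base m ≃ V) (z : Option (Fin m) → Bool)
    (hz : z none = true) : row (precomp V rot g) z = row g z := by
  rw [row_precomp, cutVec_comp_rot _ ((spread_slotL_none z).trans hz), row]

theorem col_rot {m : ℕ} {V : Type} (g : Base m ≃ V) (w : Option (Fin m) → Bool)
    (hw : w none = true) : col (precomp V rot g) w = col g w := by
  rw [col_precomp, rot_conj_pairing _ ((spread_slotR_none w).trans hw), col]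

theorem odd_card_row {m : ℕ} {V : Type} [Fintype V] (g : Base m ≃ V)
    (z : Option (Fin m) → Bool) : Odd #{v | row g z v = true} := by
  rw [row, card_filter_comp_symm]
  exact odd_card_cutVec _

theorem col_involutive {m : ℕ} {V : Type} (g : Base m ≃ V) (w : Option (Fin m) → Bool) :
    Function.Involutive (col g w) := fun v => by
  simp [col, pairing_involutive (spread slotR w) (g.symm v)]

theorem cutCost_row_col {m : ℕ} {V : Type} [Fintype V] [DecidableEq V] (g : Base m ≃ V)
    (z w : Option (Fin m) → Bool) :
    cutCost (row g z) (col g w) = if z none = true ∧ w none = true then 5 else 3 := by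
  rw [row, col, cutCost_conj, cutCost_cutVec_pairing _ _ (spread_slotL_or_spread_slotR z w),
    spread_slotL_none, spread_slotR_none]

theorem cutCost_row_rot_rot_col {m : ℕ} {V : Type} [Fintype V] [DecidableEq V] (g : Base m ≃ V)
    (z w : Option (Fin m) → Bool) (hz : z none = false) (hw : w none = false) :
    cutCost (row (precomp V rot (precomp V rot g)) z) (col g w) = 1 := by
  have := cutCost_cutVec_comp_rot _ _ (spread_slotL_or_spread_slotR z w)
    ((spread_slotL_none z).trans hz) ((spread_slotR_none w).trans hw)
  rw [← cutCost_conj g] at this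
  exact this

/-- The weight of a pair of strings, depending on their special bits. -/
def weight : Bool → Bool → ℝ
  | false, false => 198 / 200
  | true, true => -(121 / 250)
  | _, _ => -(1 / 200)

theorem sum_weight_mul {I : Type} [Fintype I] [DecidableEq I] (o : I) (Z W : Finset (I → Bool)) :
    ∑ z : I → Bool, ∑ w : I → Bool, weight (z o) (w o) *
        ((if z ∈ Z then 1 else 0) * (if w ∈ W then 1 else 0)) =
      ∑ b, ∑ c, weight b c * ((#{z ∈ Z | z o = b} : ℝ) * #{w ∈ W | w o = c}) := by
  have key : ∀ (A : Finset (I → Bool)) b, (#{z ∈ A | z o = b} : ℝ) =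
      ∑ z, if z ∈ A ∧ z o = b then 1 else 0 := fun A b => by
    rw [Finset.sum_boole, ← Finset.filter_filter]
    simp
  simp only [Fintype.sum_bool, key, Fintype.sum_mul_sum]
  simp only [Finset.mul_sum, ← Finset.sum_add_distrib]
  refine Finset.sum_congr rfl fun z _ => Finset.sum_congr rfl fun w _ => ?_
  by_cases hz : z ∈ Z <;> by_cases hw : w ∈ W <;> cases z o <;> cases w o <;>
    simp [hz, hw]

theorem exists_rectangle_weight_bound : ∃ θ : ℝ, 0 < θ ∧ θ < 1 ∧
    ∀ (m : ℕ) (V : Type) [Fintype V] [DecidableEq V] (X : Finset (V → Bool)) (Y : Finset (V → V)),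
      (∀ a ∈ X, ∀ τ ∈ Y, Odd #{v | a v = true} → Function.Involutive τ → cutCost a τ ≠ 1) →
      ∑ g : Base m ≃ V, ∑ z, ∑ w, weight (z none) (w none) *
        ((if row g z ∈ X then 1 else 0) * (if col g w ∈ Y then 1 else 0)) ≤
      2 * (Fintype.card (Base m ≃ V) * 4 ^ (m + 1) * θ ^ ((m + 1) / 200)) := by
  obtain ⟨θ, h0, h1, h⟩ := exists_rectangle_bound
  refine ⟨θ, h0, h1, fun m V _ _ X Y hXY => ?_⟩
  have := h (Base m ≃ V) (Option (Fin m)) (fun g => {z | row g z ∈ X}) (fun g => {w | col g w ∈ Y})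
    none (fun f => precomp V (slotSwap none (slotL f)))
    (fun f => precomp V (slotSwap none (slotR f))) (precomp V rot)
    _ _ (fun b g => rfl) (fun b g => rfl) (fun f g b => ?_) (fun f g => ?_) (fun f g b => ?_)
    (fun f g => ?_) (fun g => ?_) (fun g => ?_) (fun g => ?_) (fun g => ?_)
  · simp only [Fintype.card_option, Fintype.card_fin] at this
    refine le_trans (le_of_eq ?_) this
    simp only [Finset.mul_sum, ← Finset.sum_sub_distrib]
    refine Finset.sum_congr rfl fun g _ => ?_
    have := sum_weight_mul none ({z | row g z ∈ X} : Finset (Option (Fin m) → Bool))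
      {w | col g w ∈ Y}
    simp only [Finset.mem_filter, Finset.mem_univ, true_and] at this
    rw [this]
    simp only [Fintype.sum_bool, weight]
    ring
  · refine Finset.card_equiv (Equiv.arrowCongr (Equiv.swap none f) (Equiv.refl _)) fun z => ?_
    simp only [Finset.mem_filter, Finset.mem_univ, true_and, row_swap]
    simp [Equiv.arrowCongr]
  · simp only [Finset.filter_filter]
    congr 2
    ext w
    simp +contextual [and_comm, col_swap_of_false]
  · refine Finset.card_equiv (Equiv.arrowCongr (Equiv.swap none f) (Equiv.refl _)) fun w => ?_
    simp only [Finset.mem_filter, Finset.mem_univ, true_and, col_swap]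
    simp [Equiv.arrowCongr]
  · simp only [Finset.filter_filter]
    congr 2
    ext z
    simp +contextual [and_comm, row_swap_of_false]
  · ext v
    simp [precomp, rot_five]
  · simp only [Finset.filter_filter]
    congr 2
    ext z
    simp +contextual [and_comm, row_rot]
  · simp only [Finset.filter_filter]
    congr 2
    ext w
    simp +contextual [and_comm, col_rot]
  · simp only [Finset.filter_filter, Nat.cast_eq_zero, Finset.card_eq_zero]
    by_contra! hne
    obtain ⟨⟨z, hz⟩, ⟨w, hw⟩⟩ := hne
    simp only [Finset.mem_filter, Finset.mem_univ, true_and] at hz hw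
    exact hXY _ hz.1 _ hw.1 (odd_card_row _ _) (col_involutive _ _)
      (cutCost_row_rot_rot_col g z w hz.2 hw.2)

theorem exists_rounding {Ω A : Type} [Fintype Ω] [Fintype A] [DecidableEq A] (κ : Ω → ℝ)
    (α : Ω → A) (u : A → ℝ) (hu₀ : ∀ a, 0 ≤ u a) (hu₁ : ∀ a, u a ≤ 1) :
    ∃ X : Finset A, (∀ a ∈ X, 0 < u a) ∧
      ∑ ω, κ ω * u (α ω) ≤ ∑ ω, κ ω * (if α ω ∈ X then 1 else 0) := by
  classical
  refine ⟨Finset.univ.filter fun a => 0 < u a ∧ 0 < ∑ ω with α ω = a, κ ω,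
    fun a ha => (Finset.mem_filter.1 ha).2.1, ?_⟩
  rw [← Finset.sum_fiberwise _ α, ← Finset.sum_fiberwise _ α]
  refine Finset.sum_le_sum fun a _ => ?_
  have key : ∀ F : A → ℝ, ∑ ω with α ω = a, κ ω * F (α ω) = (∑ ω with α ω = a, κ ω) * F a :=
    fun F => by
      rw [Finset.sum_mul]
      exact Finset.sum_congr rfl fun ω hω => by rw [(Finset.mem_filter.1 hω).2]
  rw [key u, key fun b => if b ∈ _ then 1 else 0]
  simp only [Finset.mem_filter, Finset.mem_univ, true_and]
  split_ifs with h
  · nlinarith [hu₁ a]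
  · rcases (hu₀ a).eq_or_lt with h' | h'
    · simp [← h']
    · have : ∑ ω with α ω = a, κ ω ≤ 0 := by
        by_contra! h''
        exact h ⟨h', h''⟩
      nlinarith

/-- The sets with an odd number of elements. -/
abbrev OddSet (V : Type) [Fintype V] := {a : V → Bool // Odd #{v | a v = true}}

/-- The involutions. -/
abbrev Invol (V : Type) := {τ : V → V // Function.Involutive τ}

/-- `row` as an odd set. -/
def oddRow {m : ℕ} {V : Type} [Fintype V] (g : Base m ≃ V) (z : Option (Fin m) → Bool) :
    OddSet V := ⟨row g z, odd_card_row g z⟩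

/-- `col` as an involution. -/
def involCol {m : ℕ} {V : Type} (g : Base m ≃ V) (w : Option (Fin m) → Bool) : Invol V :=
  ⟨col g w, col_involutive g w⟩

/-- The weighted sum of the entries of a matrix indexed by odd sets and involutions. -/
def weightedSum (m : ℕ) {V : Type} [Fintype V] [DecidableEq V] (S : OddSet V → Invol V → ℝ) : ℝ :=
  ∑ g : Base m ≃ V, ∑ z, ∑ w, weight (z none) (w none) * S (oddRow g z) (involCol g w)

theorem exists_weightedSum_bound : ∃ θ : ℝ, 0 < θ ∧ θ < 1 ∧
    ∀ (m : ℕ) (V : Type) [Fintype V] [DecidableEq V] (u : OddSet V → ℝ) (v : Invol V → ℝ) (D : ℝ),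
      (∀ a, 0 ≤ u a) → (∀ τ, 0 ≤ v τ) → (∀ a τ, u a * v τ ≤ D) →
      (∀ a τ, cutCost a.1 τ.1 = 1 → u a * v τ = 0) →
      weightedSum m (fun a τ => u a * v τ) ≤
        D * (2 * (Fintype.card (Base m ≃ V) * 4 ^ (m + 1) * θ ^ ((m + 1) / 200))) := by
  classical
  obtain ⟨θ, h0, h1, h⟩ := exists_rectangle_weight_bound
  refine ⟨θ, h0, h1, fun m V _ _ u v D hu hv hD huv => ?_⟩
  set B : ℝ := 2 * (Fintype.card (Base m ≃ V) * 4 ^ (m + 1) * θ ^ ((m + 1) / 200))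
  have hB : 0 ≤ B := by positivity
  have unit : ∀ (u : OddSet V → ℝ) (v : Invol V → ℝ), (∀ a, 0 ≤ u a) → (∀ τ, 0 ≤ v τ) →
      (∀ a, u a ≤ 1) → (∀ τ, v τ ≤ 1) → (∀ a τ, cutCost a.1 τ.1 = 1 → u a * v τ = 0) →
      weightedSum m (fun a τ => u a * v τ) ≤ B := by
    intro u v hu hv hu1 hv1 huv
    let κ : (Base m ≃ V) × (Option (Fin m) → Bool) × (Option (Fin m) → Bool) → ℝ :=
      fun ω => weight (ω.2.1 none) (ω.2.2 none)
    obtain ⟨X, hX, hX'⟩ := exists_rounding (fun ω => κ ω * v (involCol ω.1 ω.2.2))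
      (fun ω => oddRow ω.1 ω.2.1) u hu hu1
    obtain ⟨Y, hY, hY'⟩ := exists_rounding
      (fun ω => κ ω * (if oddRow ω.1 ω.2.1 ∈ X then 1 else 0))
      (fun ω => involCol ω.1 ω.2.2) v hv hv1
    have hXY := h m V (X.map (Function.Embedding.subtype _)) (Y.map (Function.Embedding.subtype _))
      (fun a ha τ hτ _ _ hc => by
        obtain ⟨a', ha', rfl⟩ := Finset.mem_map.1 ha
        obtain ⟨τ', hτ', rfl⟩ := Finset.mem_map.1 hτ
        exact (mul_pos (hX a' ha') (hY τ' hτ')).ne' (huv a' τ' hc))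
    have eX : ∀ (g : Base m ≃ V) z, row g z ∈ X.map (Function.Embedding.subtype _) ↔ oddRow g z ∈ X :=
      fun g z => Finset.mem_map' (Function.Embedding.subtype _) (a := oddRow g z)
    have eY : ∀ (g : Base m ≃ V) w, col g w ∈ Y.map (Function.Embedding.subtype _) ↔ involCol g w ∈ Y :=
      fun g w => Finset.mem_map' (Function.Embedding.subtype _) (a := involCol g w)
    simp only [eX, eY] at hXY
    simp only [Fintype.sum_prod_type, κ] at hX' hY'
    unfold weightedSum
    calc _ = _ := ?_
      _ ≤ _ := hX'
      _ = _ := ?_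
      _ ≤ _ := hY'
      _ = _ := ?_
      _ ≤ _ := hXY
    all_goals
      refine Finset.sum_congr rfl fun g _ => Finset.sum_congr rfl fun z _ =>
        Finset.sum_congr rfl fun w _ => ?_
      ring
  rcases isEmpty_or_nonempty (OddSet V) with hE | hE
  · have : IsEmpty (Base m ≃ V) := ⟨fun g => hE.false (oddRow g fun _ => false)⟩
    simp [weightedSum, B]
  have : Nonempty (Invol V) := ⟨⟨id, fun _ => rfl⟩⟩
  obtain ⟨a₀, ha₀⟩ := Finite.exists_max u
  obtain ⟨τ₀, hτ₀⟩ := Finite.exists_max v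
  have hD0 : 0 ≤ D := (mul_nonneg (hu a₀) (hv τ₀)).trans (hD a₀ τ₀)
  rcases (hu a₀).eq_or_lt with hα | hα
  · have : ∀ a, u a = 0 := fun a => le_antisymm (hα ▸ ha₀ a) (hu a)
    simpa [weightedSum, this] using mul_nonneg hD0 hB
  rcases (hv τ₀).eq_or_lt with hβ | hβ
  · have : ∀ τ, v τ = 0 := fun τ => le_antisymm (hβ ▸ hτ₀ τ) (hv τ)
    simpa [weightedSum, this] using mul_nonneg hD0 hB
  have hscale := unit (fun a => u a / u a₀) (fun τ => v τ / v τ₀) (fun a => div_nonneg (hu a) hα.le)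
    (fun τ => div_nonneg (hv τ) hβ.le) (fun a => (div_le_one hα).2 (ha₀ a))
    (fun τ => (div_le_one hβ).2 (hτ₀ τ))
    (fun a τ hc => by rw [div_mul_div_comm, huv a τ hc, zero_div])
  calc weightedSum m (fun a τ => u a * v τ)
      = u a₀ * v τ₀ * weightedSum m (fun a τ => u a / u a₀ * (v τ / v τ₀)) := by
        simp only [weightedSum, Finset.mul_sum]
        refine Finset.sum_congr rfl fun g _ => Finset.sum_congr rfl fun z _ =>
          Finset.sum_congr rfl fun w _ => ?_
        field_simp
    _ ≤ u a₀ * v τ₀ * B := mul_le_mul_of_nonneg_left hscale (mul_nonneg hα.le hβ.le)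
    _ ≤ D * B := mul_le_mul_of_nonneg_right (hD a₀ τ₀) hB

theorem sum_apply_none {m : ℕ} (F : Bool → ℝ) :
    ∑ z : Option (Fin m) → Bool, F (z none) = 2 ^ m * (F true + F false) := by
  rw [Fintype.sum_equiv (Equiv.piOptionEquivProd (β := fun _ => Bool)) (fun z => F (z none))
    (fun p => F p.1) (fun z => rfl), Fintype.sum_prod_type]
  simp [mul_add]

theorem weightedSum_cutCost (m : ℕ) {V : Type} [Fintype V] [DecidableEq V] :
    weightedSum m (fun (a : OddSet V) (τ : Invol V) => (cutCost a.1 τ.1 : ℝ) - 1) =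
      Fintype.card (Base m ≃ V) * (4 ^ m * (3 / 125)) := by
  let F : Bool → Bool → ℝ := fun b c => weight b c * (if b = true ∧ c = true then 4 else 2)
  have h : ∀ (g : Base m ≃ V) (z w : Option (Fin m) → Bool),
      weight (z none) (w none) * ((cutCost (oddRow g z).1 (involCol g w).1 : ℝ) - 1) =
        F (z none) (w none) := fun g z w => by
    simp only [oddRow, involCol, cutCost_row_col, F]
    split_ifs <;> norm_num
  have h' : ∑ z : Option (Fin m) → Bool, ∑ w : Option (Fin m) → Bool, F (z none) (w none) =
      4 ^ m * (3 / 125) := by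
    simp only [sum_apply_none (F _)]
    rw [← Finset.mul_sum, sum_apply_none fun b => F b true + F b false,
      show (4 : ℝ) = 2 * 2 by norm_num, mul_pow]
    simp only [F, weight]
    norm_num
    ring
  simp only [weightedSum, h, h', Finset.sum_const, Finset.card_univ, nsmul_eq_mul]

/-- Lower bound for the nonnegative rank of the slack matrix `cutCost - 1`. -/
theorem exists_le_card_factorization : ∃ θ : ℝ, 0 < θ ∧ θ < 1 ∧
    ∀ (m : ℕ) (K : Type) [Fintype K] (u : K → OddSet (Fin (4 * m + 5)) → ℝ)
      (v : K → Invol (Fin (4 * m + 5)) → ℝ), (∀ r a, 0 ≤ u r a) → (∀ r τ, 0 ≤ v r τ) →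
      (∀ a τ, (cutCost a.1 τ.1 : ℝ) - 1 = ∑ r, u r a * v r τ) →
      3 / 1000 ≤ Fintype.card K * (4 * m + 5) * θ ^ ((m + 1) / 200) := by
  obtain ⟨θ, h0, h1, h⟩ := exists_weightedSum_bound
  refine ⟨θ, h0, h1, fun m K _ u v hu hv hS => ?_⟩
  have hle : ∀ r a τ, u r a * v r τ ≤ (cutCost a.1 τ.1 : ℝ) - 1 := fun r a τ => by
    rw [hS]
    exact Finset.single_le_sum (f := fun r => u r a * v r τ)
      (fun r _ => mul_nonneg (hu r a) (hv r τ)) (Finset.mem_univ r)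
  have hr := fun r => h m (Fin (4 * m + 5)) (u r) (v r) (4 * m + 5) (hu r) (hv r)
    (fun a τ => (hle r a τ).trans (by
      have : cutCost a.1 τ.1 ≤ 4 * m + 5 := (Finset.card_le_univ _).trans (by simp)
      have : (cutCost a.1 τ.1 : ℝ) ≤ 4 * m + 5 := by exact_mod_cast this
      linarith))
    (fun a τ hc => le_antisymm ((hle r a τ).trans (by simp [hc])) (mul_nonneg (hu r a) (hv r τ)))
  have hsum := Finset.sum_le_sum fun r (_ : r ∈ Finset.univ) => hr r
  have hswap : ∑ r, weightedSum m (fun a τ => u r a * v r τ) =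
      weightedSum m (fun (a : OddSet (Fin (4 * m + 5))) τ => (cutCost a.1 τ.1 : ℝ) - 1) := by
    simp only [weightedSum, hS, Finset.mul_sum]
    rw [Finset.sum_comm]
    refine Finset.sum_congr rfl fun g _ => ?_
    rw [Finset.sum_comm]
    refine Finset.sum_congr rfl fun z _ => Finset.sum_comm
  have hcard : 0 < Fintype.card (Base m ≃ Fin (4 * m + 5)) := Fintype.card_pos_iff.2
    ⟨Fintype.equivFinOfCardEq (by simp; ring)⟩
  rw [hswap, weightedSum_cutCost, Finset.sum_const, Finset.card_univ, nsmul_eq_mul] at hsum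
  have hpos : (0 : ℝ) < Fintype.card (Base m ≃ Fin (4 * m + 5)) * 4 ^ m * 8 := by positivity
  refine le_of_mul_le_mul_left ?_ hpos
  rw [pow_succ] at hsum
  linarith

/-- The generating point of `Ppoly` given by a schedule and a bound on its loads. -/
def schedPoint {n m : ℕ} (σ : Fin n → Fin m) (t : ℕ) : Option (Fin m × Fin n) → ℝ :=
  fun q => Option.elim q (t : ℝ) (fun ij => assignVec σ ij)

theorem schedPoint_mem {n m : ℕ} {p : Fin n → ℕ} {σ : Fin n → Fin m} {t : ℕ}
    (h : ∀ i, load p σ i ≤ t) : schedPoint σ t ∈ Ppoly n m p :=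
  subset_convexHull ℝ _ ⟨σ, t, h, rfl⟩

theorem schedPoint_add {n m : ℕ} (σ : Fin n → Fin m) (s t : ℕ) :
    schedPoint σ (s + t) = schedPoint σ s + (t : ℝ) • Pi.single none 1 := by
  funext q
  cases q <;> simp [schedPoint]

theorem load_le_makespan {n m : ℕ} (p : Fin n → ℕ) (σ : Fin n → Fin m) (i : Fin m) :
    load p σ i ≤ makespan p σ := Finset.le_sup (f := load p σ) (Finset.mem_univ i)

theorem schedPoint_add_smul_mem {n m : ℕ} (p : Fin n → ℕ) (σ : Fin n → Fin m) {s : ℝ}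
    (hs : 0 ≤ s) :
    schedPoint σ (makespan p σ) + s • Pi.single none 1 ∈ Ppoly n m p := by
  obtain ⟨k, hk⟩ := exists_nat_ge s
  have hk' : (0 : ℝ) < (k + 1 : ℕ) := by positivity
  have h := (convex_convexHull ℝ _).add_smul_mem
    (schedPoint_mem (load_le_makespan p σ))
    (y := ((k + 1 : ℕ) : ℝ) • Pi.single none 1) (t := s / (k + 1 : ℕ))
    (by
      rw [← schedPoint_add]
      exact schedPoint_mem fun i => (load_le_makespan p σ i).trans (Nat.le_add_right _ _))
    ⟨by positivity, (div_le_one hk').2 (by push_cast; linarith)⟩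
  rwa [smul_smul, div_mul_cancel₀ _ hk'.ne'] at h

theorem exists_isEF_Ppoly (n m : ℕ) (p : Fin n → ℕ) : ∃ k, IsEF (Ppoly n m p) k := by
  classical
  let e := Fintype.equivFin (Option (Fin n → Fin m))
  let g : Option (Fin n → Fin m) → Option (Fin m × Fin n) → ℝ := fun o =>
    Option.elim o (Pi.single none 1) fun σ => schedPoint σ (makespan p σ)
  let π : (Fin (Fintype.card (Option (Fin n → Fin m))) → ℝ) →ₗ[ℝ] (Option (Fin m × Fin n) → ℝ) :=
    Fintype.linearCombination ℝ (g ∘ e.symm)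
  have hπ : ∀ y, π y = y (e none) • Pi.single none 1 +
      ∑ σ, y (e (some σ)) • schedPoint σ (makespan p σ) := fun y => by
    rw [Fintype.linearCombination_apply, ← e.sum_comp, Fintype.sum_option]
    simp [g]
  let C : Matrix (Fin 1) (Fin (Fintype.card (Option (Fin n → Fin m)))) ℝ :=
    fun _ r => if e.symm r = none then 0 else 1
  have hC : ∀ y r, C.mulVec y r = ∑ σ, y (e (some σ)) := fun y r => by
    rw [Matrix.mulVec, dotProduct, ← e.sum_comp, Fintype.sum_option]
    simp [C]
  refine ⟨Fintype.card (Option (Fin n → Fin m)), _, 1, -1, 0, C, 1, π.toAffineMap, ?_⟩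
  have hA : ∀ (y : Fin (Fintype.card (Option (Fin n → Fin m))) → ℝ) r,
      (-1 : Matrix (Fin (Fintype.card (Option (Fin n → Fin m)))) _ ℝ).mulVec y r = -y r := fun y r => by
    simp [Matrix.neg_mulVec]
  simp only [hA, hC, Pi.zero_apply, Pi.one_apply, neg_nonpos, forall_const]
  refine Set.Subset.antisymm ?_ (convexHull_min ?_ ?_)
  · rintro _ ⟨y, ⟨hy, hy1⟩, rfl⟩
    have : π y = ∑ σ, y (e (some σ)) •
        (schedPoint σ (makespan p σ) + y (e none) • Pi.single none 1) := by
      simp only [hπ, smul_add, Finset.sum_add_distrib, ← Finset.sum_smul, hy1, one_smul]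
      exact add_comm _ _
    change π y ∈ _
    rw [this]
    exact (convex_convexHull ℝ _).sum_mem (fun σ _ => hy _) hy1 fun σ _ =>
      schedPoint_add_smul_mem p σ (hy _)
  · rintro _ ⟨σ, t, ht, rfl⟩
    obtain ⟨k, rfl⟩ := Nat.exists_eq_add_of_le
      (show makespan p σ ≤ t from Finset.sup_le fun i _ => ht i)
    refine ⟨fun r => Option.elim (e.symm r) (k : ℝ) fun σ' => if σ' = σ then 1 else 0,
      ⟨fun r => ?_, ?_⟩, ?_⟩
    · obtain ⟨_ | σ', rfl⟩ := e.surjective r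
      · simp
      · simp only [Equiv.symm_apply_apply, Option.elim_some]
        split_ifs <;> norm_num
    · simp
    · change π _ = schedPoint σ _
      rw [schedPoint_add, hπ, add_comm]
      simp
  · refine Convex.affine_image _ fun y hy z hz s t hs ht hst => ⟨fun r => ?_, ?_⟩
    · exact add_nonneg (mul_nonneg hs (hy.1 r)) (mul_nonneg ht (hz.1 r))
    · simp [Finset.sum_add_distrib, ← Finset.mul_sum, hy.2, hz.2, hst]

/-- Two unit jobs and one job of size two for each element of `Fin N`. -/
abbrev Job (N : ℕ) := (Fin N × Bool) ⊕ Fin N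

/-- Two machines for each element of `Fin N`. -/
abbrev Machine (N : ℕ) := Fin N × Bool

/-- The processing times of the jobs. -/
def jobSize {N : ℕ} : Job N → ℕ := Sum.elim (fun _ => 1) fun _ => 2

/-- The schedule of an involution: the unit jobs of matched elements are run together on the
machines of the smaller one, and the jobs of size two fill the remaining machines. -/
def pairSchedule {N : ℕ} (τ : Fin N → Fin N) : Job N → Machine N :=
  Sum.elim (fun j => (min j.1 (τ j.1), j.2 && decide (τ j.1 ≠ j.1)))
    fun v => if v ≤ τ v then (τ v, true) else (v, false)

theorem sum_pairSchedule_le {N : ℕ} {τ : Fin N → Fin N} (hτ : Function.Involutive τ)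
    (c : Machine N) : ∑ j, (if pairSchedule τ j = c then jobSize j else 0) ≤ 2 := by
  obtain ⟨i, b⟩ := c
  simp only [Fintype.sum_sum_type, Fintype.sum_prod_type, Fintype.sum_bool, jobSize, pairSchedule,
    Sum.elim_inl, Sum.elim_inr, ← Finset.sum_add_distrib]
  rw [← Finset.sum_subset (Finset.subset_univ {i, τ i})]
  · rcases lt_trichotomy i (τ i) with h | h | h
    · rw [Finset.sum_pair h.ne]
      cases b <;> simp [hτ i, h.le, h.ne, h.ne', h.not_ge]
    · rw [← h]
      cases b <;> simp [← h]
    · rw [Finset.sum_pair h.ne']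
      cases b <;> simp [hτ i, h.le, h.ne, h.ne', h.not_ge]
  · intro v _ hv
    simp only [Finset.mem_insert, Finset.mem_singleton, not_or] at hv
    have h1 : τ v ≠ i := fun h => hv.2 (by rw [← h, hτ])
    have h2 : min v (τ v) ≠ i := by
      rcases min_choice v (τ v) with h | h <;> rw [h]
      exacts [hv.1, h1]
    by_cases h : v ≤ τ v <;> simp [h, h1, h2, hv.1]

/-- The selection of the first unit job, or of the first machine, of the elements of `a`. -/
def selected {N : ℕ} (a : Fin N → Bool) (j : Fin N × Bool) : Bool := a j.1 && j.2

theorem card_selected_ne {N : ℕ} {τ : Fin N → Fin N} (hτ : Function.Involutive τ)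
    (a : Fin N → Bool) :
    #{j | selected a j ≠ selected a (pairSchedule τ (.inl j))} = cutCost a τ := by
  rw [Finset.card_filter, Fintype.sum_prod_type, cutCost, Finset.card_filter]
  simp only [Fintype.sum_bool]
  let G : Fin N → ℕ := fun v => if τ v < v ∧ a v = false ∧ a (τ v) = true then 1 else 0
  let F : Fin N → ℕ := fun v => if a v = true ∧ (τ v = v ∨ (τ v < v ∧ a (τ v) = false)) then 1 else 0
  have hG : ∑ v, G (τ v) = ∑ v, G v := Equiv.sum_comp hτ.toPerm G
  calc _ = ∑ v, (F v + G v) := Finset.sum_congr rfl fun v _ => ?_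
    _ = ∑ v, (F v + G (τ v)) := by rw [Finset.sum_add_distrib, Finset.sum_add_distrib, hG]
    _ = _ := Finset.sum_congr rfl fun v _ => ?_
  · rcases lt_trichotomy v (τ v) with h | h | h
    · simp [F, G, selected, pairSchedule, h.le, h.ne', h.not_gt]
    · cases ha : a v <;> simp [F, G, selected, pairSchedule, ← h, ha]
    · cases ha : a v <;> cases ha' : a (τ v) <;>
        simp [F, G, selected, pairSchedule, h.le, h.ne, h, ha, ha']
  · rcases lt_trichotomy v (τ v) with h | h | h
    · cases ha : a v <;> cases ha' : a (τ v) <;>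
        simp [F, G, hτ v, h.ne', h.not_gt, h, ha, ha']
    · cases ha : a v <;> simp [F, G, ← h, ha]
    · cases ha : a v <;> cases ha' : a (τ v) <;>
        simp [F, G, hτ v, h.ne, h.not_gt, h, ha, ha']

theorem two_le_of_sum_le {N : ℕ} (hN : 0 < N) {s : Job N → Machine N} {t : ℕ}
    (h : ∀ c, ∑ j, (if s j = c then jobSize j else 0) ≤ t) : 2 ≤ t := by
  refine le_trans ?_ (h (s (.inr ⟨0, hN⟩)))
  refine le_trans ?_ (Finset.single_le_sum (fun _ _ => Nat.zero_le _)
    (Finset.mem_univ (Sum.inr ⟨0, hN⟩)))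
  simp [jobSize]

theorem three_le_card_selected_ne_add {N : ℕ} {a : Fin N → Bool} (ha : Odd #{v | a v = true})
    {s : Job N → Machine N} {t : ℕ}
    (h : ∀ c, ∑ j, (if s j = c then jobSize j else 0) ≤ t) :
    3 ≤ #{j | selected a j ≠ selected a (s (.inl j))} + t := by
  have hN : 0 < N := by
    obtain ⟨v, -⟩ := Finset.card_pos.1 ha.pos
    exact v.pos
  have ht := two_le_of_sum_le hN h
  by_contra! hlt
  obtain rfl : t = 2 := by omega
  have hcut : ∀ j, selected a j = selected a (s (.inl j)) := by
    have : #{j | selected a j ≠ selected a (s (.inl j))} = 0 := by omega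
    simpa [Finset.filter_eq_empty_iff] using this
  have hload : ∀ c, ∑ j, (if s j = c then jobSize j else 0) = 2 := by
    have htot : ∑ c, ∑ j, (if s j = c then jobSize j else 0) = ∑ c : Machine N, 2 := by
      rw [Finset.sum_comm]
      simp [jobSize]
      ring
    exact fun c => (Finset.sum_eq_sum_iff_of_le fun c _ => h c).1 htot c (Finset.mem_univ c)
  have heven : ∀ c, Even #{j | s (.inl j) = c} := fun c => by
    have := hload c
    simp only [Fintype.sum_sum_type, jobSize, Sum.elim_inl, Sum.elim_inr] at this
    rw [← Finset.card_filter, ← Finset.sum_filter, Finset.sum_const, smul_eq_mul] at this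
    rw [Nat.even_iff]
    omega
  have hsel : #{j : Fin N × Bool | selected a j = true} = #{v | a v = true} := by
    rw [Finset.card_filter, Fintype.sum_prod_type, Finset.card_filter]
    simp only [Fintype.sum_bool]
    simp [selected]
  rw [← hsel, ← Nat.not_even_iff_odd] at ha
  refine ha ?_
  rw [Finset.card_eq_sum_card_fiberwise (f := fun j => s (.inl j))
    (t := {c : Machine N | selected a c = true})]
  · refine Finset.even_sum _ fun c hc => ?_
    have : ∀ j, selected a j = true ∧ s (.inl j) = c ↔ s (.inl j) = c := fun j =>
      and_iff_right_of_imp fun hj => by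
        rw [hcut, hj]
        exact (Finset.mem_filter.1 hc).2
    simpa only [Finset.filter_filter, this] using heven c
  · intro j hj
    simpa [← hcut] using hj

/-- The jobs, numbered. -/
def jobEquiv (N : ℕ) : Job N ≃ Fin (N * 2 + N) :=
  (Equiv.sumCongr (Equiv.prodCongr (Equiv.refl _) finTwoEquiv.symm |>.trans finProdFinEquiv)
    (Equiv.refl _)).trans finSumFinEquiv

/-- The machines, numbered. -/
def machineEquiv (N : ℕ) : Machine N ≃ Fin (N * 2) :=
  (Equiv.prodCongr (Equiv.refl _) finTwoEquiv.symm).trans finProdFinEquiv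

/-- The processing times of the numbered jobs. -/
def procTime (N : ℕ) : Fin (N * 2 + N) → ℕ := jobSize ∘ (jobEquiv N).symm

/-- Schedules of the numbered jobs on the numbered machines. -/
def schedEquiv (N : ℕ) : (Job N → Machine N) ≃ (Fin (N * 2 + N) → Fin (N * 2)) :=
  Equiv.arrowCongr (jobEquiv N) (machineEquiv N)

theorem load_schedEquiv {N : ℕ} (s : Job N → Machine N) (c : Machine N) :
    load (procTime N) (schedEquiv N s) (machineEquiv N c) =
      ∑ j, if s j = c then jobSize j else 0 := by
  rw [load, ← (jobEquiv N).sum_comp]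
  simp [schedEquiv, procTime]

theorem load_pairSchedule_le {N : ℕ} {τ : Fin N → Fin N} (hτ : Function.Involutive τ)
    (i : Fin (N * 2)) : load (procTime N) (schedEquiv N (pairSchedule τ)) i ≤ 2 := by
  obtain ⟨c, rfl⟩ := (machineEquiv N).surjective i
  rw [load_schedEquiv]
  exact sum_pairSchedule_le hτ c

theorem optMakespan_procTime {N : ℕ} (hN : 0 < N) :
    optMakespan (N * 2 + N) (N * 2) (procTime N) = 2 := by
  have hid : makespan (procTime N) (schedEquiv N (pairSchedule id)) ∈
    {t | ∃ σ, makespan (procTime N) σ = t} := ⟨_, rfl⟩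
  refine le_antisymm ((Nat.sInf_le hid).trans
    (Finset.sup_le fun i _ => load_pairSchedule_le (fun _ => rfl) i)) ?_
  obtain ⟨σ, hσ⟩ := Nat.sInf_mem ⟨_, hid⟩
  obtain ⟨s, rfl⟩ := (schedEquiv N).surjective σ
  rw [optMakespan, ← hσ]
  refine two_le_of_sum_le hN (s := s) fun c => ?_
  rw [← load_schedEquiv]
  exact load_le_makespan _ _ _

/-- The number of unit jobs crossing the partition given by `a`, plus the makespan, minus `3`. -/
def cutFunctional {N : ℕ} (a : Fin N → Bool) :
    (Option (Fin (N * 2) × Fin (N * 2 + N)) → ℝ) →ᵃ[ℝ] ℝ :=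
  (LinearMap.proj none + ∑ j : Fin N × Bool, ∑ c : Machine N,
    (if selected a j ≠ selected a c then (1 : ℝ) else 0) •
      LinearMap.proj (some (machineEquiv N c, jobEquiv N (.inl j)))).toAffineMap +
    AffineMap.const ℝ _ (-3)

theorem cutFunctional_schedPoint {N : ℕ} (a : Fin N → Bool) (s : Job N → Machine N) (t : ℕ) :
    cutFunctional a (schedPoint (schedEquiv N s) t) =
      (#{j | selected a j ≠ selected a (s (.inl j))} : ℝ) + t - 3 := by
  have hcoord : ∀ j c, schedPoint (schedEquiv N s) t (some (machineEquiv N c, jobEquiv N j)) =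
      if s j = c then 1 else 0 := fun j c => by simp [schedPoint, assignVec, schedEquiv]
  have hnone : schedPoint (schedEquiv N s) t none = t := rfl
  simp only [cutFunctional, AffineMap.coe_add, LinearMap.coe_toAffineMap, AffineMap.coe_const,
    Pi.add_apply, Function.const_apply, LinearMap.add_apply, LinearMap.sum_apply,
    LinearMap.smul_apply, LinearMap.proj_apply, hcoord, hnone, smul_eq_mul, mul_ite, mul_one,
    mul_zero, Finset.sum_ite_eq, Finset.mem_univ, if_true, Finset.sum_boole]
  ring

theorem cutFunctional_nonneg {N : ℕ} {a : Fin N → Bool} (ha : Odd #{v | a v = true}) :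
    ∀ x ∈ Ppoly (N * 2 + N) (N * 2) (procTime N), 0 ≤ cutFunctional a x := by
  intro x hx
  refine convexHull_min (t := cutFunctional a ⁻¹' Set.Ici 0) ?_
    ((convex_Ici 0).affine_preimage _) hx
  rintro _ ⟨σ, t, ht, rfl⟩
  obtain ⟨s, rfl⟩ := (schedEquiv N).surjective σ
  have := three_le_card_selected_ne_add ha (s := s) (t := t) fun c => by
    rw [← load_schedEquiv]
    exact ht _
  have h : (3 : ℝ) ≤ #{j | selected a j ≠ selected a (s (.inl j))} + t := by exact_mod_cast this
  change 0 ≤ cutFunctional a (schedPoint _ t)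
  rw [cutFunctional_schedPoint]
  linarith

theorem exists_le_xc_mul : ∃ θ : ℝ, 0 < θ ∧ θ < 1 ∧ ∀ m : ℕ, 3 / 1000 ≤
    ((xc (Ppoly ((4 * m + 5) * 2 + (4 * m + 5)) ((4 * m + 5) * 2) (procTime (4 * m + 5))) : ℝ) + 1) *
      (4 * m + 5) * θ ^ ((m + 1) / 200) := by
  obtain ⟨θ, h0, h1, h⟩ := exists_le_card_factorization
  refine ⟨θ, h0, h1, fun m => ?_⟩
  set P := Ppoly ((4 * m + 5) * 2 + (4 * m + 5)) ((4 * m + 5) * 2) (procTime (4 * m + 5))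
  have hEF : IsEF P (xc P) := Nat.sInf_mem (exists_isEF_Ppoly _ _ _)
  obtain ⟨u, v, hu, hv, huv⟩ := hEF.exists_factorization
    (fun a : OddSet (Fin (4 * m + 5)) => cutFunctional a.1)
    (fun a => cutFunctional_nonneg a.2)
    (fun τ : Invol (Fin (4 * m + 5)) => schedPoint (schedEquiv _ (pairSchedule τ.1)) 2)
    (fun τ => schedPoint_mem (load_pairSchedule_le τ.2))
  have := h m (Option (Fin (xc P))) u v hu hv fun a τ => by
    rw [← huv, cutFunctional_schedPoint, card_selected_ne τ.2]
    push_cast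
    ring
  simpa using this

theorem exists_two_pow_le_xc : ∃ C : ℕ, 1 ≤ C ∧ ∀ n : ℕ, 1 ≤ n → ∃ N : ℕ, 0 < N ∧ N ≤ C * n ∧
    (2 : ℝ) ^ n ≤ xc (Ppoly (N * 2 + N) (N * 2) (procTime N)) := by
  obtain ⟨θ, h0, h1, h⟩ := exists_le_xc_mul
  obtain ⟨K, hK⟩ := exists_pow_lt_of_lt_one (show (0 : ℝ) < 1 / 8 by norm_num) h1
  have hK0 : 1 ≤ K := Nat.one_le_iff_ne_zero.2 fun h => by norm_num [h] at hK
  obtain ⟨t, ht0, ht⟩ : ∃ t : ℕ, 1 ≤ t ∧ 534000 * K ≤ 2 ^ t :=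
    ⟨534000 * K, by omega, Nat.lt_two_pow_self.le⟩
  refine ⟨801 * K * t, Nat.mul_pos (by omega) ht0, fun n hn => ?_⟩
  have htn : 1 ≤ t * n := Nat.mul_pos ht0 hn
  have hL : 1 ≤ K * (t * n) := Nat.mul_pos hK0 htn
  obtain ⟨m, hm⟩ : ∃ m, m + 1 = K * (t * n) * 200 := ⟨K * (t * n) * 200 - 1, by omega⟩
  refine ⟨4 * m + 5, by omega, by nlinarith, ?_⟩
  have hxc := h m
  set k := xc (Ppoly ((4 * m + 5) * 2 + (4 * m + 5)) ((4 * m + 5) * 2) (procTime (4 * m + 5)))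
  rw [hm, Nat.mul_div_cancel _ (by norm_num)] at hxc
  have hθ : θ ^ (K * (t * n)) ≤ (1 / 8) ^ (t * n) := by
    rw [pow_mul]
    exact pow_le_pow_left₀ (by positivity) hK.le _
  have hsize : (4 * m + 5 : ℝ) ≤ 801 * K * 2 ^ (t * n) := by
    have h2 : 4 * m + 5 ≤ 801 * (K * (t * n)) := by omega
    have h3 : t * n ≤ 2 ^ (t * n) := Nat.lt_two_pow_self.le
    have h4 : 4 * m + 5 ≤ 801 * K * 2 ^ (t * n) := by
      calc _ ≤ 801 * K * (t * n) := by linarith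
        _ ≤ _ := Nat.mul_le_mul_left _ h3
    exact_mod_cast h4
  have hpow : (534000 * K : ℝ) * 2 ^ n ≤ 4 ^ (t * n) := by
    have h2 : 534000 * K * 2 ^ n ≤ 2 ^ (t * n) * 2 ^ (t * n) :=
      Nat.mul_le_mul (ht.trans (Nat.pow_le_pow_right two_pos (Nat.le_mul_of_pos_right t hn)))
        (Nat.pow_le_pow_right two_pos (Nat.le_mul_of_pos_left n ht0))
    rw [← mul_pow] at h2
    exact_mod_cast h2
  have hmain : (3 : ℝ) / 1000 * 4 ^ (t * n) ≤ (k + 1) * (801 * K) := by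
    have h2 : (3 : ℝ) / 1000 ≤ (k + 1) * (801 * K * 2 ^ (t * n)) * (1 / 8) ^ (t * n) :=
      hxc.trans (by gcongr)
    have h3 : (2 : ℝ) ^ (t * n) * (1 / 8) ^ (t * n) * 4 ^ (t * n) = 1 := by
      rw [← mul_pow, ← mul_pow]
      norm_num
    calc (3 : ℝ) / 1000 * 4 ^ (t * n)
        ≤ (k + 1) * (801 * K * 2 ^ (t * n)) * (1 / 8) ^ (t * n) * 4 ^ (t * n) :=
          mul_le_mul_of_nonneg_right h2 (by positivity)
      _ = (k + 1) * (801 * K) * (2 ^ (t * n) * (1 / 8) ^ (t * n) * 4 ^ (t * n)) := by ring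
      _ = _ := by rw [h3, mul_one]
  have hKpos : (0 : ℝ) < 801 * K := by positivity
  have hone : (1 : ℝ) ≤ 2 ^ n := one_le_pow₀ one_le_two
  have : (2 : ℝ) ^ n * 2 ≤ k + 1 := by
    refine le_of_mul_le_mul_right ?_ hKpos
    linarith
  linarith

/-- There are instances of `P||C_max` with `O(n)` jobs and machines, processing times in
`{1,2}` and optimal makespan `2`, such that `xc(P(J,M)) ≥ 2^(c·n/log n)`. -/
theorem makespan_large_xc :
    ∃ c C : ℝ, 0 < c ∧ 1 ≤ C ∧ ∀ n : ℕ, 2 ≤ n →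
      ∃ (nJ m : ℕ) (p : Fin nJ → ℕ),
        (nJ : ℝ) ≤ C * n ∧ (m : ℝ) ≤ C * n ∧
        (∀ j, p j = 1 ∨ p j = 2) ∧
        optMakespan nJ m p = 2 ∧
        (2 : ℝ) ^ (c * n / Real.log n) ≤ (xc (Ppoly nJ m p) : ℝ) := by
  obtain ⟨C, hC, h⟩ := exists_two_pow_le_xc
  refine ⟨Real.log 2, 3 * C, Real.log_pos one_lt_two, ?_, fun n hn => ?_⟩
  · have : (1 : ℝ) ≤ C := by exact_mod_cast hC
    linarith
  obtain ⟨N, hN, hNC, hxc⟩ := h n (by omega)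
  have hNC' : (N : ℝ) ≤ C * n := by exact_mod_cast hNC
  have h0 : (0 : ℝ) ≤ N := Nat.cast_nonneg N
  refine ⟨N * 2 + N, N * 2, procTime N, ?_, ?_, fun j => ?_, optMakespan_procTime hN, ?_⟩
  · push_cast
    linarith
  · push_cast
    linarith
  · rcases h : (jobEquiv N).symm j with j' | j' <;> simp [procTime, jobSize, h]
  · refine le_trans ?_ hxc
    rw [← Real.rpow_natCast]
    refine Real.rpow_le_rpow_of_exponent_le one_le_two ?_
    have hn' : (2 : ℝ) ≤ n := by exact_mod_cast hn
    have hlog : Real.log 2 ≤ Real.log n := Real.log_le_log two_pos hn'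
    rw [div_le_iff₀ ((Real.log_pos one_lt_two).trans_le hlog), mul_comm]
    exact mul_le_mul_of_nonneg_left hlog (Nat.cast_nonneg n)
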